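/- Let L be a QDS generator on B(H) with Lindblad representation given by Hamiltonian H and noise operators {L_k}, and let ρ ∈ ker(L) be a density operator of maximal rank, i.e., supp(ρ) = supp(ker(L)). Let H̃ = supp(ρ), let Π : H̃ → H be the inclusion isometry, and let L̃ be the reduced QDS generator on B(H̃) with Hamiltonian Π† H Π and noise operators Π† L_k Π. Then ker(L) = ρ^{1/2} (ker(L̃†) ⊕ 0) ρ^{1/2}, where ker(L̃†) ⊕ 0 denotes the set of operators in ker(L̃†) extended by zero on the orthogonal complement of H̃. -/

import Mathlib

namespace QDS

open Matrix
open scoped ComplexOrder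

/-! ### Basic single-system notions -/

section Single

variable {ι : Type*} [Fintype ι] [DecidableEq ι]

open Classical in
/-- The (unique) positive-semidefinite square root of a positive-semidefinite matrix
(junk value `0` if no positive-semidefinite square root exists). -/
noncomputable def msqrt (A : Matrix ι ι ℂ) : Matrix ι ι ℂ :=
  if h : ∃ B : Matrix ι ι ℂ, B.PosSemidef ∧ B * B = A then h.choose else 0

open Classical in
/-- The Moore–Penrose pseudoinverse of a matrix, defined via its characterizing
properties (it always exists and is unique for complex matrices). -/
noncomputable def mpinv (A : Matrix ι ι ℂ) : Matrix ι ι ℂ :=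
  if h : ∃ B : Matrix ι ι ℂ,
      A * B * A = A ∧ B * A * B = B ∧ (A * B)ᴴ = A * B ∧ (B * A)ᴴ = B * A
  then h.choose else 0

/-- A density operator: positive semidefinite with unit trace. -/
def IsDensity (ρ : Matrix ι ι ℂ) : Prop := ρ.PosSemidef ∧ ρ.trace = 1

/-- A CPTP map in Kraus (operator-sum) form. -/
def IsCPTP (T : Matrix ι ι ℂ →ₗ[ℂ] Matrix ι ι ℂ) : Prop :=
  ∃ (m : ℕ) (M : Fin m → Matrix ι ι ℂ),
    (∀ X, T X = ∑ k, M k * X * (M k)ᴴ) ∧ (∑ k, (M k)ᴴ * M k) = 1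

/-- The Lindblad (QDS) generator with Hamiltonian `Hm` and noise operators `Lk`:
`L(X) = -i[Hm, X] + Σₖ (Lₖ X Lₖ† - ½{Lₖ†Lₖ, X})`. -/
noncomputable def lindbladMap (Hm : Matrix ι ι ℂ) {m : ℕ} (Lk : Fin m → Matrix ι ι ℂ) :
    Matrix ι ι ℂ →ₗ[ℂ] Matrix ι ι ℂ :=
  (-Complex.I) • (LinearMap.mulLeft ℂ Hm - LinearMap.mulRight ℂ Hm) +
    ∑ k, ((LinearMap.mulRight ℂ (Lk k)ᴴ).comp (LinearMap.mulLeft ℂ (Lk k)) -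
      ((1 : ℂ)/2) • (LinearMap.mulLeft ℂ ((Lk k)ᴴ * Lk k) +
        LinearMap.mulRight ℂ ((Lk k)ᴴ * Lk k)))

/-- `L` is a QDS (Lindblad) generator. -/
def IsLindblad (L : Matrix ι ι ℂ →ₗ[ℂ] Matrix ι ι ℂ) : Prop :=
  ∃ Hm : Matrix ι ι ℂ, Hm.IsHermitian ∧
    ∃ (m : ℕ) (Lk : Fin m → Matrix ι ι ℂ), L = lindbladMap Hm Lk

/-- `Ld` is the Hilbert–Schmidt adjoint of `L` (w.r.t. `⟨X,Y⟩ = Tr(X†Y)`). -/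
def IsHSAdjoint (L Ld : Matrix ι ι ℂ →ₗ[ℂ] Matrix ι ι ℂ) : Prop :=
  ∀ X Y : Matrix ι ι ℂ, ((Ld X)ᴴ * Y).trace = (Xᴴ * L Y).trace

/-- The fixed-point set of a (super)operator. -/
def fixSet (T : Matrix ι ι ℂ →ₗ[ℂ] Matrix ι ι ℂ) : Set (Matrix ι ι ℂ) := {X | T X = X}

/-- The support of an operator: the orthogonal complement of its kernel,
equivalently the range of its adjoint. -/
noncomputable def msupp (A : Matrix ι ι ℂ) : Submodule ℂ (ι → ℂ) := LinearMap.range (Aᴴ).mulVecLin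

/-- The support of a set of operators: the span of the union of their supports. -/
noncomputable def suppSet (W : Set (Matrix ι ι ℂ)) : Submodule ℂ (ι → ℂ) := ⨆ O ∈ W, msupp O

/-- The minimal modular-invariant distorted algebra generated by `W` relative to `ρ`:
the smallest subspace containing `W` that is closed under the adjoint, under the
`ρ`-modified product `(X,Y) ↦ X ρ⁻ Y`, and under the modular map `X ↦ ρ^{1/2} X ρ⁻^{1/2}`. -/
noncomputable def Fdist (ρ : Matrix ι ι ℂ) (W : Set (Matrix ι ι ℂ)) :
    Submodule ℂ (Matrix ι ι ℂ) :=
  sInf {S : Submodule ℂ (Matrix ι ι ℂ) | W ⊆ S ∧ (∀ X ∈ S, Xᴴ ∈ S) ∧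
    (∀ X ∈ S, ∀ Y ∈ S, X * mpinv ρ * Y ∈ S) ∧
    (∀ X ∈ S, msqrt ρ * X * mpinv (msqrt ρ) ∈ S)}

/-- `ρ` is globally asymptotically stable for the generator `L`: it is invariant and every
solution of `ẋ = L(x)` starting at a density operator converges to `ρ` as `t → ∞`. -/
def IsGAS (L : Matrix ι ι ℂ →ₗ[ℂ] Matrix ι ι ℂ) (ρ : Matrix ι ι ℂ) : Prop :=
  L ρ = 0 ∧
  ∀ σ : Matrix ι ι ℂ, IsDensity σ →
    ∀ x : ℝ → Matrix ι ι ℂ, x 0 = σ →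
      (∀ t : ℝ, ∀ i j, HasDerivAt (fun s : ℝ => x s i j) (L (x t) i j) t) →
      ∀ i j, Filter.Tendsto (fun t : ℝ => x t i j) Filter.atTop (nhds (ρ i j))

end Single

/-! ### Bipartite notions -/

section Bipartite

variable {α β : Type*} [Fintype α] [Fintype β] [DecidableEq α] [DecidableEq β]

/-- Partial trace over the second factor. -/
noncomputable def ptraceB (ρ : Matrix (α × β) (α × β) ℂ) : Matrix α α ℂ :=
  Matrix.of fun i j => ∑ k : β, ρ (i, k) (j, k)

/-- The operator Schmidt span of `ρ` on the first factor:
`{Tr_B[(I ⊗ B) ρ] : B ∈ B(H_B)}`. -/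
noncomputable def opSchmidtA (ρ : Matrix (α × β) (α × β) ℂ) : Set (Matrix α α ℂ) :=
  {A | ∃ B : Matrix β β ℂ,
    A = ptraceB ((Matrix.kroneckerMap (· * ·) (1 : Matrix α α ℂ) B) * ρ)}

/-- The (vector) Schmidt span of `v ∈ V_A ⊗ V_B` relative to `V_A`: the image of `v`
under partial inner products with vectors of `V_B`. -/
def vSchmidtA (v : α × β → ℂ) : Set (α → ℂ) :=
  {w | ∃ b : β → ℂ, w = fun a => ∑ j, (starRingEnd ℂ) (b j) * v (a, j)}

/-- `Σ_A(v) ⊗ V_B` as a subspace of `V_A ⊗ V_B`. -/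
noncomputable def extVSchmidtA (v : α × β → ℂ) : Submodule ℂ (α × β → ℂ) :=
  Submodule.span ℂ {v' | ∃ w ∈ vSchmidtA v, ∃ b : β → ℂ, v' = fun p => w p.1 * b p.2}

end Bipartite

/-! ### Multipartite notions -/

section Multipartite

variable {n : ℕ} {d : Fin n → Type*} [∀ a, Fintype (d a)] [∀ a, DecidableEq (d a)]

/-- Index type of the neighborhood factor `H_N`. -/
abbrev nbhdIdx (d : Fin n → Type*) (N : Finset (Fin n)) : Type _ :=
  ∀ a : {x : Fin n // x ∈ N}, d a

/-- Index type of the complementary factor `H_N̄`. -/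
abbrev nbhdCoIdx (d : Fin n → Type*) (N : Finset (Fin n)) : Type _ :=
  ∀ a : {x : Fin n // ¬ x ∈ N}, d a

/-- The factorization `H ≃ H_N ⊗ H_N̄` at the level of index types. -/
def splitEquiv (d : Fin n → Type*) (N : Finset (Fin n)) :
    (∀ a, d a) ≃ nbhdIdx d N × nbhdCoIdx d N :=
  Equiv.piEquivPiSubtypeProd (fun x => x ∈ N) d

variable (d)

/-- The operator `A ⊗ B` on `H = H_N ⊗ H_N̄`, viewed as an operator on `H`. -/
noncomputable def splitLift (N : Finset (Fin n))
    (A : Matrix (nbhdIdx d N) (nbhdIdx d N) ℂ)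
    (B : Matrix (nbhdCoIdx d N) (nbhdCoIdx d N) ℂ) :
    Matrix (∀ a, d a) (∀ a, d a) ℂ :=
  (Matrix.kroneckerMap (· * ·) A B).submatrix (splitEquiv d N) (splitEquiv d N)

/-- The neighborhood operator `A ⊗ I_N̄` on `H`. -/
noncomputable def nbhdLift (N : Finset (Fin n))
    (A : Matrix (nbhdIdx d N) (nbhdIdx d N) ℂ) : Matrix (∀ a, d a) (∀ a, d a) ℂ :=
  splitLift d N A 1

/-- The operator `I_N ⊗ B` on `H`. -/
noncomputable def coLift (N : Finset (Fin n))
    (B : Matrix (nbhdCoIdx d N) (nbhdCoIdx d N) ℂ) : Matrix (∀ a, d a) (∀ a, d a) ℂ :=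
  splitLift d N 1 B

/-- The reduced state `ρ_N = Tr_N̄(ρ)` on the neighborhood `N`. -/
noncomputable def nbhdPtrace (N : Finset (Fin n)) (ρ : Matrix (∀ a, d a) (∀ a, d a) ℂ) :
    Matrix (nbhdIdx d N) (nbhdIdx d N) ℂ :=
  Matrix.of fun i j => ∑ k : nbhdCoIdx d N,
    ρ ((splitEquiv d N).symm (i, k)) ((splitEquiv d N).symm (j, k))

/-- The operator Schmidt span of `ρ` on the neighborhood `N`:
`Σ_N(ρ) = {Tr_N̄[(I_N ⊗ B) ρ] : B}`. -/
noncomputable def nbhdSchmidt (N : Finset (Fin n)) (ρ : Matrix (∀ a, d a) (∀ a, d a) ℂ) :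
    Set (Matrix (nbhdIdx d N) (nbhdIdx d N) ℂ) :=
  {A | ∃ B : Matrix (nbhdCoIdx d N) (nbhdCoIdx d N) ℂ,
    A = nbhdPtrace d N (coLift d N B * ρ)}

/-- The extended minimal modular-invariant distorted algebra
`F_{ρ_N}(Σ_N(ρ)) ⊗ B(H_N̄)` as a subspace of `B(H)`. -/
noncomputable def extF (N : Finset (Fin n)) (ρ : Matrix (∀ a, d a) (∀ a, d a) ℂ) :
    Submodule ℂ (Matrix (∀ a, d a) (∀ a, d a) ℂ) :=
  Submodule.span ℂ {X | ∃ A ∈ Fdist (nbhdPtrace d N ρ) (nbhdSchmidt d N ρ),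
    ∃ B : Matrix (nbhdCoIdx d N) (nbhdCoIdx d N) ℂ, X = splitLift d N A B}

/-- A neighborhood QDS generator for `N`: a Lindblad generator whose Hamiltonian and
noise operators all act as `X_N ⊗ I_N̄`. -/
def IsNbhdGen (N : Finset (Fin n))
    (L : Matrix (∀ a, d a) (∀ a, d a) ℂ →ₗ[ℂ] Matrix (∀ a, d a) (∀ a, d a) ℂ) : Prop :=
  ∃ HN : Matrix (nbhdIdx d N) (nbhdIdx d N) ℂ, HN.IsHermitian ∧
    ∃ (m : ℕ) (Lk : Fin m → Matrix (nbhdIdx d N) (nbhdIdx d N) ℂ),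
      L = lindbladMap (nbhdLift d N HN) fun k => nbhdLift d N (Lk k)

/-- A purely dissipative neighborhood generator for `N` (zero Hamiltonian in some
Lindblad representation). -/
def IsDissipNbhdGen (N : Finset (Fin n))
    (L : Matrix (∀ a, d a) (∀ a, d a) ℂ →ₗ[ℂ] Matrix (∀ a, d a) (∀ a, d a) ℂ) : Prop :=
  ∃ (m : ℕ) (Lk : Fin m → Matrix (nbhdIdx d N) (nbhdIdx d N) ℂ),
    L = lindbladMap 0 fun k => nbhdLift d N (Lk k)

/-- The family of neighborhood generators `Lj` is frustration free: every invariant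
state of the sum is invariant for each component. -/
def IsFFFamily {M : ℕ}
    (Lj : Fin M → (Matrix (∀ a, d a) (∀ a, d a) ℂ →ₗ[ℂ] Matrix (∀ a, d a) (∀ a, d a) ℂ)) :
    Prop :=
  ∀ ρ : Matrix (∀ a, d a) (∀ a, d a) ℂ, IsDensity ρ → (∑ j, Lj j) ρ = 0 → ∀ j, Lj j ρ = 0

/-- `ρ` is frustration-free quasi-locally stabilizable relative to the neighborhood
structure `Nb`. -/
def IsFFQLS {M : ℕ} (Nb : Fin M → Finset (Fin n))
    (ρ : Matrix (∀ a, d a) (∀ a, d a) ℂ) : Prop :=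
  ∃ Lj : Fin M → (Matrix (∀ a, d a) (∀ a, d a) ℂ →ₗ[ℂ] Matrix (∀ a, d a) (∀ a, d a) ℂ),
    (∀ j, IsNbhdGen d (Nb j) (Lj j)) ∧ IsFFFamily d Lj ∧ IsGAS (∑ j, Lj j) ρ

/-- A pure state `|ψ⟩⟨ψ|` is dissipatively quasi-locally stabilizable relative to `Nb`:
it is GAS for a QL generator whose components have zero Hamiltonian and neighborhood
noise operators annihilating `ψ`. -/
def IsDQLS {M : ℕ} (Nb : Fin M → Finset (Fin n)) (ψ : (∀ a, d a) → ℂ) : Prop :=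
  ∃ Lj : Fin M → (Matrix (∀ a, d a) (∀ a, d a) ℂ →ₗ[ℂ] Matrix (∀ a, d a) (∀ a, d a) ℂ),
    (∀ j, ∃ (m : ℕ) (Dk : Fin m → Matrix (nbhdIdx d (Nb j)) (nbhdIdx d (Nb j)) ℂ),
      Lj j = lindbladMap 0 (fun k => nbhdLift d (Nb j) (Dk k)) ∧
      ∀ k, (nbhdLift d (Nb j) (Dk k)).mulVec ψ = 0) ∧
    IsGAS (∑ j, Lj j) (Matrix.vecMulVec ψ (star ψ))

/-- The (vector) Schmidt span of `ψ` relative to the neighborhood factor `H_N`. -/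
def vecSchmidt (N : Finset (Fin n)) (ψ : (∀ a, d a) → ℂ) : Set (nbhdIdx d N → ℂ) :=
  {w | ∃ b : nbhdCoIdx d N → ℂ,
    w = fun i => ∑ k, (starRingEnd ℂ) (b k) * ψ ((splitEquiv d N).symm (i, k))}

/-- `Σ_N(ψ) ⊗ H_N̄` as a subspace of `H`. -/
noncomputable def extVecSchmidt (N : Finset (Fin n)) (ψ : (∀ a, d a) → ℂ) :
    Submodule ℂ ((∀ a, d a) → ℂ) :=
  Submodule.span ℂ {v | ∃ w ∈ vecSchmidt d N ψ, ∃ b : nbhdCoIdx d N → ℂ,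
    v = fun x => w ((splitEquiv d N) x).1 * b ((splitEquiv d N) x).2}

end Multipartite

/-!
For a faithful stationary state `ρ`, equip matrices with the GNS inner product
`⟪X, Y⟫ = Tr(Y ρ X†)`. By the carré-du-champ identity the map `X ↦ L(Xρ)ρ⁻¹` is dissipative for it,
and its adjoint is `L†`. A dissipative operator has the same kernel as its adjoint, so
`ker L = (ker L†) ρ`, and taking adjoints `ker L = ρ (ker L†)`. Hence `ker L†` is invariant under
`X ↦ ρ X ρ⁻¹`, and therefore under its positive square root `X ↦ ρ^{1/2} X ρ^{-1/2}`, which gives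
`ker L = ρ^{1/2} (ker L†) ρ^{1/2}`.

In general, `L(ρ) = 0` forces the range of `V` (the support of `ρ`) to be invariant under the noise
operators and under the effective generator `G`, so that `Y ↦ V Y V†` intertwines the reduced
generator with `L`, and maximality of `supp ρ` confines `ker L` to the image of this map.
-/

section InnerProduct

open Module.End
open scoped InnerProductSpace

variable {𝕜 E : Type*} [RCLike 𝕜] [NormedAddCommGroup E] [InnerProductSpace 𝕜 E]

theorem ker_le_ker_of_re_inner_nonpos {A B : E →ₗ[𝕜] E}
    (hAB : ∀ x y, ⟪B x, y⟫_𝕜 = ⟪x, A y⟫_𝕜) (hA : ∀ x, RCLike.re ⟪x, A x⟫_𝕜 ≤ 0) :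
    LinearMap.ker A ≤ LinearMap.ker B := by
  intro x hx
  by_contra hBx
  have hnorm : ‖B x‖ ^ 2 ≠ 0 := pow_ne_zero 2 (norm_ne_zero_iff.mpr hBx)
  set c := RCLike.re ⟪B x, A (B x)⟫_𝕜
  have affine (t : ℝ) : t * ‖B x‖ ^ 2 + c ≤ 0 := by
    have h := hA ((t : 𝕜) • x + B x)
    rwa [map_add, map_smul, LinearMap.mem_ker.mp hx, smul_zero, zero_add, inner_add_left,
      inner_smul_left, RCLike.conj_ofReal, ← hAB, map_add, RCLike.re_ofReal_mul,
      inner_self_eq_norm_sq] at h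
  have h := affine ((1 - c) / ‖B x‖ ^ 2)
  rw [div_mul_cancel₀ _ hnorm] at h
  linarith

theorem ker_eq_ker_of_re_inner_nonpos {A B : E →ₗ[𝕜] E}
    (hAB : ∀ x y, ⟪B x, y⟫_𝕜 = ⟪x, A y⟫_𝕜) (hA : ∀ x, RCLike.re ⟪x, A x⟫_𝕜 ≤ 0) :
    LinearMap.ker A = LinearMap.ker B := by
  refine (ker_le_ker_of_re_inner_nonpos hAB hA).antisymm
    (ker_le_ker_of_re_inner_nonpos (fun x y ↦ ?_) fun x ↦ ?_)
  · rw [← inner_conj_symm, ← hAB, inner_conj_symm]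
  · rw [← inner_re_symm, hAB]
    exact hA x

theorem exists_apply_eq_smul_of_apply_apply_eq_smul {f : E →ₗ[𝕜] E} (hf : f.IsPositive)
    {μ : 𝕜} {x : E} (hx : f (f x) = μ • x) : ∃ ν : 𝕜, f x = ν • x := by
  rcases eq_or_ne (f x) 0 with hfx | hfx
  · exact ⟨0, by rw [hfx, zero_smul]⟩
  have hx0 : x ≠ 0 := fun h ↦ hfx (by rw [h, map_zero])
  set ν : ℝ := ‖f x‖ / ‖x‖
  have hν : 0 < ν := div_pos (norm_pos_iff.mpr hfx) (norm_pos_iff.mpr hx0)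
  have hμ : μ = (ν * ν : ℝ) := by
    have norm_sq : (‖f x‖ : 𝕜) ^ 2 = μ * (‖x‖ : 𝕜) ^ 2 := by
      rw [← inner_self_eq_norm_sq_to_K, hf.isSymmetric, hx, inner_smul_right,
        inner_self_eq_norm_sq_to_K]
    have : (‖x‖ : 𝕜) ≠ 0 := by simpa using hx0
    simp only [ν]
    push_cast
    field_simp
    exact norm_sq.symm
  refine ⟨ν, ?_⟩
  set z := f x - (ν : 𝕜) • x
  have hfz : f z = -((ν : 𝕜) • z) := by
    simp only [z, map_sub, map_smul, hx, hμ, smul_sub, smul_smul, RCLike.ofReal_mul]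
    abel
  have hz : 0 ≤ -(ν * ‖z‖ ^ 2) := by
    have h := hf.re_inner_nonneg_right z
    rwa [hfz, inner_neg_right, inner_smul_right, map_neg, RCLike.re_ofReal_mul,
      inner_self_eq_norm_sq] at h
  have hz0 : ‖z‖ ^ 2 = 0 := by nlinarith [sq_nonneg ‖z‖]
  exact sub_eq_zero.mp (norm_eq_zero.mp (sq_eq_zero_iff.mp hz0))

theorem apply_mem_of_apply_apply_mem [FiniteDimensional 𝕜 E] {f : E →ₗ[𝕜] E}
    (hf : f.IsPositive) {A : Submodule 𝕜 E} (hA : ∀ x ∈ A, f (f x) ∈ A) {x : E} (hx : x ∈ A) :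
    f x ∈ A := by
  have hff : (f ∘ₗ f).IsSymmetric := fun x y ↦ by
    simp only [LinearMap.comp_apply, hf.isSymmetric _ _]
  have htop : ⨆ μ, eigenspace (f ∘ₗ f) μ = ⊤ := by
    rw [← Submodule.orthogonal_eq_bot_iff]
    exact hff.orthogonalComplement_iSup_eigenspaces_eq_bot
  have hspan : A = ⨆ μ, A ⊓ eigenspace (f ∘ₗ f) μ :=
    Submodule.eq_iSup_inf_genEigenspace 1 hA htop
  rw [hspan] at hx
  induction hx using Submodule.iSup_induction' with
  | mem μ y hy =>
    obtain ⟨ν, hν⟩ := exists_apply_eq_smul_of_apply_apply_eq_smul hf (mem_eigenspace_iff.mp hy.2)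
    rw [hν]
    exact A.smul_mem ν hy.1
  | zero => rw [map_zero]; exact A.zero_mem
  | add y z _ _ hy hz => rw [map_add]; exact A.add_mem hy hz

end InnerProduct

section PosDef

open scoped MatrixOrder

variable {𝕜 ι : Type*} [RCLike 𝕜] [Fintype ι]

theorem trace_mul_nonneg_of_posSemidef {A B : Matrix ι ι 𝕜} (hA : A.PosSemidef)
    (hB : B.PosSemidef) : 0 ≤ (A * B).trace := by
  classical
  obtain ⟨C, rfl⟩ := CStarAlgebra.nonneg_iff_eq_star_mul_self.mp hA.nonneg
  rw [mul_assoc, trace_mul_comm]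
  exact (hB.mul_mul_conjTranspose_same C).trace_nonneg

theorem mul_mul_inv_mem_of_mul_self [DecidableEq ι] {s : Matrix ι ι 𝕜} (hs : s.PosDef)
    {A : Submodule 𝕜 (Matrix ι ι 𝕜)} (hA : ∀ X ∈ A, s * s * X * (s * s)⁻¹ ∈ A)
    {X : Matrix ι ι 𝕜} (hX : X ∈ A) : s * X * s⁻¹ ∈ A := by
  let : NormedAddCommGroup (Matrix ι ι 𝕜) := toMatrixNormedAddCommGroup 1 PosDef.one
  let : InnerProductSpace 𝕜 (Matrix ι ι 𝕜) := toMatrixInnerProductSpace 1 PosSemidef.one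
  have inner_eq (Y Z : Matrix ι ι 𝕜) : inner 𝕜 Y Z = (Z * Yᴴ).trace := by
    change (Z * 1 * Yᴴ).trace = _
    rw [mul_one]
  let f : Matrix ι ι 𝕜 →ₗ[𝕜] Matrix ι ι 𝕜 :=
    LinearMap.mulRight 𝕜 s⁻¹ ∘ₗ LinearMap.mulLeft 𝕜 s
  have hf : f.IsPositive := by
    refine ⟨fun Y Z ↦ ?_, fun Y ↦ ?_⟩ <;>
      simp only [f, inner_eq, LinearMap.comp_apply, LinearMap.mulLeft_apply,
        LinearMap.mulRight_apply, conjTranspose_mul, hs.isHermitian.eq, hs.inv.isHermitian.eq]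
    · rw [← mul_assoc, ← mul_assoc, trace_mul_comm, mul_assoc, mul_assoc, mul_assoc]
    · rw [trace_mul_comm, mul_assoc, mul_assoc, ← mul_assoc Yᴴ]
      exact (RCLike.nonneg_iff.mp (trace_mul_nonneg_of_posSemidef hs.inv.posSemidef
        (hs.posSemidef.conjTranspose_mul_mul_same Y))).1
  exact apply_mem_of_apply_apply_mem hf (fun Y hY ↦ by
    simpa only [f, LinearMap.comp_apply, LinearMap.mulLeft_apply, LinearMap.mulRight_apply,
      Matrix.mul_inv_rev, mul_assoc] using hA Y hY) hX

theorem posDef_mul_self {s : Matrix ι ι 𝕜} (hs : s.PosDef) : (s * s).PosDef := by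
  classical
  simpa only [hs.isHermitian.eq] using
    PosDef.conjTranspose_mul_self s (mulVec_injective_of_isUnit hs.isUnit)

theorem exists_posDef_mul_self_eq {r : Matrix ι ι 𝕜} (hr : r.PosDef) :
    ∃ s : Matrix ι ι 𝕜, s.PosDef ∧ s * s = r := by
  classical exact
    ⟨CFC.sqrt r, hr.isStrictlyPositive.sqrt.posDef, CFC.sqrt_mul_sqrt_self r hr.posSemidef.nonneg⟩

theorem msqrt_eq {A B : Matrix ι ι ℂ} (hB : B.PosSemidef) (hBA : B * B = A) : msqrt A = B := by
  classical
  have h : ∃ C : Matrix ι ι ℂ, C.PosSemidef ∧ C * C = A := ⟨B, hB, hBA⟩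
  rw [msqrt, dif_pos h, ← CFC.sqrt_unique hBA hB.nonneg]
  exact (CFC.sqrt_unique h.choose_spec.2 h.choose_spec.1.nonneg).symm

theorem eq_zero_of_sum_mul_mul_conjTranspose_eq_zero {α κ : Type*} [Fintype α] [Finite κ]
    {r : Matrix ι ι 𝕜} (hr : r.PosDef) {C : α → Matrix κ ι 𝕜}
    (hC : ∑ a, C a * r * (C a)ᴴ = 0) (a : α) : C a = 0 := by
  classical
  have := Fintype.ofFinite κ
  obtain ⟨s, hs, rfl⟩ := exists_posDef_mul_self_eq hr
  have hterm : C a * (s * s) * (C a)ᴴ = 0 := by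
    refine (Finset.sum_eq_zero_iff_of_nonneg fun b _ ↦ ?_).mp hC a (Finset.mem_univ a)
    exact (hr.posSemidef.mul_mul_conjTranspose_same (C b)).nonneg
  have hCs : C a * s = 0 := by
    rw [← self_mul_conjTranspose_eq_zero, conjTranspose_mul, hs.isHermitian.eq]
    simpa only [Matrix.mul_assoc] using hterm
  rw [← mul_nonsing_inv_cancel_right s (C a) ((isUnit_iff_isUnit_det s).mp hs.isUnit), hCs,
    Matrix.zero_mul]

end PosDef

section Isometry

variable {ι κ α R 𝕜 : Type*} [Fintype ι] [Fintype κ]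

theorem mul_mul_conjTranspose_mul_mul_mul_conjTranspose [Semiring R] [StarRing R] [Fintype α]
    [DecidableEq ι] {V : Matrix α ι R} (hV : Vᴴ * V = 1) (A B : Matrix ι ι R) :
    V * A * Vᴴ * (V * B * Vᴴ) = V * (A * B) * Vᴴ := by
  rw [← Matrix.mul_assoc, ← Matrix.mul_assoc, Matrix.mul_assoc (V * A), hV, Matrix.mul_one,
    Matrix.mul_assoc V]

theorem exists_eq_mul_of_range_le [CommSemiring R] {A : Matrix α ι R} {B : Matrix α κ R}
    (h : LinearMap.range B.mulVecLin ≤ LinearMap.range A.mulVecLin) :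
    ∃ C : Matrix ι κ R, B = A * C := by
  classical
  have hcol (j : κ) : ∃ c : ι → R, A *ᵥ c = B.col j := by
    obtain ⟨c, hc⟩ := h ⟨Pi.single j 1, rfl⟩
    exact ⟨c, by simpa using hc⟩
  choose c hc using hcol
  exact ⟨(of c)ᵀ, ext fun i j ↦ (congrFun (hc j) i).symm⟩

theorem mul_conjTranspose_mul_of_range_le [Fintype α] [DecidableEq ι] [CommSemiring R]
    [StarRing R] {V : Matrix α ι R} (hV : Vᴴ * V = 1) {X : Matrix α κ R}
    (hX : LinearMap.range X.mulVecLin ≤ LinearMap.range V.mulVecLin) : V * (Vᴴ * X) = X := by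
  obtain ⟨W, rfl⟩ := exists_eq_mul_of_range_le hX
  rw [← Matrix.mul_assoc Vᴴ, hV, Matrix.one_mul]

theorem range_le_suppSet {W : Set (Matrix ι ι ℂ)} {X : Matrix ι ι ℂ} (hX : Xᴴ ∈ W) :
    LinearMap.range X.mulVecLin ≤ suppSet W := by
  refine le_iSup₂_of_le Xᴴ hX ?_
  rw [msupp, conjTranspose_conjTranspose]

theorem eq_compress_of_suppSet_le [DecidableEq κ] {V : Matrix ι κ ℂ} (hV : Vᴴ * V = 1)
    {W : Set (Matrix ι ι ℂ)} (hW : suppSet W ≤ LinearMap.range V.mulVecLin)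
    {X : Matrix ι ι ℂ} (hX : X ∈ W) (hX' : Xᴴ ∈ W) : X = V * (Vᴴ * X * V) * Vᴴ := by
  have hleft : V * (Vᴴ * X) = X :=
    mul_conjTranspose_mul_of_range_le hV ((range_le_suppSet hX').trans hW)
  have hright : V * (Vᴴ * Xᴴ) = Xᴴ :=
    mul_conjTranspose_mul_of_range_le hV
      ((range_le_suppSet (by rwa [conjTranspose_conjTranspose])).trans hW)
  have hright' : X * V * Vᴴ = X := by simpa using congrArg conjTranspose hright
  rw [Matrix.mul_assoc Vᴴ, Matrix.mul_assoc, Matrix.mul_assoc, hright', hleft]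

theorem exists_posDef_eq_mul_mul_conjTranspose [RCLike 𝕜] [DecidableEq κ]
    {V : Matrix ι κ 𝕜} (hV : Vᴴ * V = 1) {ρ : Matrix ι ι 𝕜} (hρ : ρ.PosSemidef)
    (hrange : LinearMap.range V.mulVecLin = LinearMap.range ρ.mulVecLin) :
    ∃ r : Matrix κ κ 𝕜, r.PosDef ∧ ρ = V * r * Vᴴ := by
  have hleft : V * (Vᴴ * ρ) = ρ := mul_conjTranspose_mul_of_range_le hV hrange.ge
  have hright : ρ * V * Vᴴ = ρ := by
    simpa [hρ.isHermitian.eq] using congrArg conjTranspose hleft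
  obtain ⟨W, hW⟩ := exists_eq_mul_of_range_le hrange.le
  refine ⟨Vᴴ * ρ * V, ?_, ?_⟩
  · rw [(hρ.conjTranspose_mul_mul_same V).posDef_iff_isUnit]
    refine .of_mul_eq_one (Vᴴ * W) ?_
    rw [← Matrix.mul_assoc, Matrix.mul_assoc Vᴴ, Matrix.mul_assoc Vᴴ, hright, Matrix.mul_assoc,
      ← hW, hV]
  · rw [Matrix.mul_assoc Vᴴ, Matrix.mul_assoc, Matrix.mul_assoc, hright, hleft]

end Isometry

section Lindblad

variable {ι : Type*} [Fintype ι] [DecidableEq ι] {m : ℕ}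
  {H : Matrix ι ι ℂ} {L : Fin m → Matrix ι ι ℂ} {Ld : Matrix ι ι ℂ →ₗ[ℂ] Matrix ι ι ℂ}

theorem lindbladMap_apply (H : Matrix ι ι ℂ) (L : Fin m → Matrix ι ι ℂ) (X : Matrix ι ι ℂ) :
    lindbladMap H L X = (-Complex.I) • (H * X - X * H) +
      ∑ k, (L k * X * (L k)ᴴ - (1 / 2 : ℂ) • ((L k)ᴴ * L k * X + X * ((L k)ᴴ * L k))) := by
  simp only [lindbladMap, LinearMap.add_apply, LinearMap.smul_apply, LinearMap.sub_apply,
    LinearMap.sum_apply, LinearMap.comp_apply, LinearMap.mulLeft_apply, LinearMap.mulRight_apply]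

theorem lindbladMap_carreDuChamp (H : Matrix ι ι ℂ) (L : Fin m → Matrix ι ι ℂ)
    (X Y Z : Matrix ι ι ℂ) :
    lindbladMap H L (Y * X * Z) - lindbladMap H L (Y * X) * Z - Y * lindbladMap H L (X * Z) +
        Y * lindbladMap H L X * Z =
      ∑ k, (L k * Y - Y * L k) * X * (Z * (L k)ᴴ - (L k)ᴴ * Z) := by
  have split_sum (a b c d e f g h : Matrix ι ι ℂ) :
      a + b - (c + d) - (e + f) + (g + h) = (a - c - e + g) + (b - d - f + h) := by abel
  simp only [lindbladMap_apply, add_mul, mul_add, Finset.sum_mul, Finset.mul_sum, split_sum,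
    ← Finset.sum_sub_distrib, ← Finset.sum_add_distrib]
  simp only [sub_mul, mul_sub, add_mul, mul_add, smul_mul_assoc, mul_smul_comm, mul_assoc,
    smul_sub, smul_add]
  rw [add_eq_right.mpr (by abel)]
  exact Finset.sum_congr rfl fun k _ ↦ by module

theorem trace_lindbladMap (X : Matrix ι ι ℂ) : (lindbladMap H L X).trace = 0 := by
  have h k : (L k * X * (L k)ᴴ).trace = ((L k)ᴴ * L k * X).trace := by
    rw [mul_assoc, trace_mul_comm, mul_assoc, trace_mul_comm, mul_assoc]
  simp only [lindbladMap_apply, trace_add, trace_smul, trace_sub, trace_sum, trace_mul_comm X,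
    smul_eq_mul, h, sub_self, mul_zero, zero_add]
  exact Finset.sum_eq_zero fun k _ ↦ by ring

theorem lindbladMap_conjTranspose (hH : H.IsHermitian) (X : Matrix ι ι ℂ) :
    lindbladMap H L Xᴴ = (lindbladMap H L X)ᴴ := by
  simp only [lindbladMap_apply, conjTranspose_add, conjTranspose_sub, conjTranspose_smul,
    conjTranspose_sum, conjTranspose_mul, conjTranspose_conjTranspose, hH.eq, mul_assoc]
  congr 1
  · simp [smul_sub, neg_add_eq_sub]
  · simp [smul_add, add_comm]

theorem IsHSAdjoint.apply_conjTranspose (hadj : IsHSAdjoint (lindbladMap H L) Ld)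
    (hH : H.IsHermitian) (X : Matrix ι ι ℂ) : Ld Xᴴ = (Ld X)ᴴ := by
  refine conjTranspose_injective (ext_iff_trace_mul_right.mpr fun Y ↦ ?_)
  rw [hadj, conjTranspose_conjTranspose, conjTranspose_conjTranspose]
  have h := congrArg star (hadj X Yᴴ)
  rw [← trace_conjTranspose, ← trace_conjTranspose, conjTranspose_mul, conjTranspose_mul,
    conjTranspose_conjTranspose, conjTranspose_conjTranspose, conjTranspose_conjTranspose,
    lindbladMap_conjTranspose hH, conjTranspose_conjTranspose] at h
  rw [trace_mul_comm, ← h, trace_mul_comm]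

theorem re_trace_lindbladMap_mul_nonpos {ρ : Matrix ι ι ℂ} (hH : H.IsHermitian)
    (hρ : ρ.PosSemidef) (hfix : lindbladMap H L ρ = 0) (Y : Matrix ι ι ℂ) :
    (lindbladMap H L (Y * ρ) * Yᴴ).trace.re ≤ 0 := by
  have hsq : ∑ k, (L k * Y - Y * L k) * ρ * (L k * Y - Y * L k)ᴴ =
      lindbladMap H L (Y * ρ * Yᴴ) - (lindbladMap H L (Y * ρ) * Yᴴ +
        (lindbladMap H L (Y * ρ) * Yᴴ)ᴴ) := by
    rw [conjTranspose_mul, ← lindbladMap_conjTranspose hH, conjTranspose_mul, hρ.isHermitian.eq,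
      conjTranspose_conjTranspose]
    have h := lindbladMap_carreDuChamp H L ρ Y Yᴴ
    rw [hfix, mul_zero, zero_mul, add_zero, sub_sub] at h
    simp only [h, conjTranspose_sub, conjTranspose_mul]
  have hnonneg : 0 ≤ (∑ k, (L k * Y - Y * L k) * ρ * (L k * Y - Y * L k)ᴴ).trace := by
    rw [trace_sum]
    exact Finset.sum_nonneg fun k _ ↦ (hρ.mul_mul_conjTranspose_same _).trace_nonneg
  rw [hsq, trace_sub, trace_add, trace_lindbladMap, trace_conjTranspose] at hnonneg
  have h := (Complex.nonneg_iff.mp hnonneg).1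
  simp only [Complex.sub_re, Complex.add_re, Complex.zero_re, Complex.star_def,
    Complex.conj_re] at h
  linarith

theorem IsHSAdjoint.apply_eq_zero_iff_mul_right (hadj : IsHSAdjoint (lindbladMap H L) Ld)
    (hH : H.IsHermitian) {ρ : Matrix ι ι ℂ} (hρ : ρ.PosDef) (hfix : lindbladMap H L ρ = 0)
    {Y : Matrix ι ι ℂ} : Ld Y = 0 ↔ lindbladMap H L (Y * ρ) = 0 := by
  let : NormedAddCommGroup (Matrix ι ι ℂ) := toMatrixNormedAddCommGroup ρ hρ
  let : InnerProductSpace ℂ (Matrix ι ι ℂ) := toMatrixInnerProductSpace ρ hρ.posSemidef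
  have inner_eq (X Z : Matrix ι ι ℂ) : inner ℂ X Z = (Z * ρ * Xᴴ).trace := rfl
  let A : Matrix ι ι ℂ →ₗ[ℂ] Matrix ι ι ℂ :=
    LinearMap.mulRight ℂ ρ⁻¹ ∘ₗ lindbladMap H L ∘ₗ LinearMap.mulRight ℂ ρ
  have A_apply (X : Matrix ι ι ℂ) : A X = lindbladMap H L (X * ρ) * ρ⁻¹ := rfl
  have hdet : IsUnit ρ.det := (isUnit_iff_isUnit_det ρ).mp hρ.isUnit
  have A_apply_mul (X : Matrix ι ι ℂ) : A X * ρ = lindbladMap H L (X * ρ) := by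
    rw [A_apply, nonsing_inv_mul_cancel_right _ _ hdet]
  have hker : LinearMap.ker A = LinearMap.ker Ld := by
    refine ker_eq_ker_of_re_inner_nonpos (fun X Z ↦ ?_) fun X ↦ ?_
    · rw [inner_eq, inner_eq, A_apply_mul, trace_mul_comm, hadj, trace_mul_comm]
    · rw [inner_eq, A_apply_mul]
      exact re_trace_lindbladMap_mul_nonpos hH hρ.posSemidef hfix X
  rw [← LinearMap.mem_ker, ← hker, LinearMap.mem_ker, ← A_apply_mul]
  exact (hρ.isUnit.mul_left_eq_zero).symm

theorem IsHSAdjoint.apply_eq_zero_iff_mul_left (hadj : IsHSAdjoint (lindbladMap H L) Ld)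
    (hH : H.IsHermitian) {ρ : Matrix ι ι ℂ} (hρ : ρ.PosDef) (hfix : lindbladMap H L ρ = 0)
    {Y : Matrix ι ι ℂ} : Ld Y = 0 ↔ lindbladMap H L (ρ * Y) = 0 := by
  rw [← conjTranspose_eq_zero, ← hadj.apply_conjTranspose hH,
    hadj.apply_eq_zero_iff_mul_right hH hρ hfix, ← conjTranspose_eq_zero,
    ← lindbladMap_conjTranspose hH, conjTranspose_mul, conjTranspose_conjTranspose,
    hρ.isHermitian.eq]

theorem IsHSAdjoint.mul_mul_inv_mem_ker (hadj : IsHSAdjoint (lindbladMap H L) Ld)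
    (hH : H.IsHermitian) {s : Matrix ι ι ℂ} (hs : s.PosDef) (hfix : lindbladMap H L (s * s) = 0)
    {Y : Matrix ι ι ℂ} (hY : Y ∈ LinearMap.ker Ld) : s * Y * s⁻¹ ∈ LinearMap.ker Ld := by
  have hρ : (s * s).PosDef := posDef_mul_self hs
  have hdet : IsUnit (s * s).det := (isUnit_iff_isUnit_det _).mp hρ.isUnit
  refine mul_mul_inv_mem_of_mul_self hs (fun X hX ↦ ?_) hY
  rw [LinearMap.mem_ker, hadj.apply_eq_zero_iff_mul_right hH hρ hfix,
    nonsing_inv_mul_cancel_right _ _ hdet, ← hadj.apply_eq_zero_iff_mul_left hH hρ hfix]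
  exact hX

theorem IsHSAdjoint.mem_ker_iff_exists_eq_mul_mul (hadj : IsHSAdjoint (lindbladMap H L) Ld)
    (hH : H.IsHermitian) {s : Matrix ι ι ℂ} (hs : s.PosDef) (hfix : lindbladMap H L (s * s) = 0)
    {X : Matrix ι ι ℂ} :
    X ∈ LinearMap.ker (lindbladMap H L) ↔ ∃ Y ∈ LinearMap.ker Ld, X = s * Y * s := by
  have hρ : (s * s).PosDef := posDef_mul_self hs
  have hdet : IsUnit s.det := (isUnit_iff_isUnit_det _).mp hs.isUnit
  have hdet₂ : IsUnit (s * s).det := (isUnit_iff_isUnit_det _).mp hρ.isUnit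
  constructor
  · intro hX
    refine ⟨s * ((s * s)⁻¹ * X) * s⁻¹, hadj.mul_mul_inv_mem_ker hH hs hfix ?_, ?_⟩
    · rwa [LinearMap.mem_ker, hadj.apply_eq_zero_iff_mul_left hH hρ hfix,
        mul_nonsing_inv_cancel_left _ _ hdet₂]
    · rw [mul_assoc s, nonsing_inv_mul_cancel_right _ _ hdet, ← mul_assoc,
        mul_nonsing_inv_cancel_left _ _ hdet₂]
  · rintro ⟨Y, hY, rfl⟩
    have h := hadj.mul_mul_inv_mem_ker hH hs hfix hY
    rwa [LinearMap.mem_ker, hadj.apply_eq_zero_iff_mul_right hH hρ hfix, ← mul_assoc,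
      nonsing_inv_mul_cancel_right _ _ hdet] at h

end Lindblad

section Reduction

/-- The non-Hermitian effective generator `G = -iH - ½ ∑ₖ Lₖ†Lₖ`, which collects the terms of the
Lindblad generator acting on one side: `L(X) = G X + X G† + ∑ₖ Lₖ X Lₖ†`. -/
noncomputable def effectiveGenerator {ι : Type*} [Fintype ι] {m : ℕ} (H : Matrix ι ι ℂ)
    (L : Fin m → Matrix ι ι ℂ) : Matrix ι ι ℂ :=
  (-Complex.I) • H - (1 / 2 : ℂ) • ∑ k, (L k)ᴴ * L k

variable {ι κ : Type*} [Fintype ι] [Fintype κ] {m : ℕ} {H : Matrix ι ι ℂ}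
  {L : Fin m → Matrix ι ι ℂ} {V : Matrix ι κ ℂ}

theorem effectiveGenerator_compress (hL : ∀ k, L k * V = V * (Vᴴ * L k * V)) :
    effectiveGenerator (Vᴴ * H * V) (fun k ↦ Vᴴ * L k * V) =
      Vᴴ * effectiveGenerator H L * V := by
  have hLL k : (Vᴴ * L k * V)ᴴ * (Vᴴ * L k * V) = Vᴴ * ((L k)ᴴ * L k) * V := by
    rw [conjTranspose_mul, conjTranspose_mul, conjTranspose_conjTranspose, Matrix.mul_assoc,
      Matrix.mul_assoc, ← hL]
    simp only [Matrix.mul_assoc]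
  simp only [effectiveGenerator, hLL, Matrix.mul_sub, Matrix.sub_mul, Matrix.mul_smul,
    Matrix.smul_mul, Matrix.mul_sum, Matrix.sum_mul]

variable [DecidableEq ι] [DecidableEq κ]

theorem lindbladMap_eq_effectiveGenerator (hH : H.IsHermitian) (X : Matrix ι ι ℂ) :
    lindbladMap H L X = effectiveGenerator H L * X + X * (effectiveGenerator H L)ᴴ +
      ∑ k, L k * X * (L k)ᴴ := by
  simp only [lindbladMap_apply, effectiveGenerator, conjTranspose_sub, conjTranspose_smul,
    conjTranspose_sum, conjTranspose_mul, conjTranspose_conjTranspose, hH.eq, star_neg,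
    Complex.star_def, Complex.conj_I, map_div₀, map_one, map_ofNat, neg_neg,
    Finset.sum_sub_distrib, Finset.sum_add_distrib, ← Finset.smul_sum, Finset.sum_mul,
    Finset.mul_sum, sub_mul, mul_sub, smul_mul_assoc, mul_smul_comm]
  module

theorem lindbladMap_mul_mul_conjTranspose {K : Matrix κ κ ℂ} {M : Fin m → Matrix κ κ ℂ}
    (hH : H.IsHermitian) (hK : K.IsHermitian)
    (hG : effectiveGenerator H L * V = V * effectiveGenerator K M)
    (hL : ∀ k, L k * V = V * M k) (Y : Matrix κ κ ℂ) :
    lindbladMap H L (V * Y * Vᴴ) = V * lindbladMap K M Y * Vᴴ := by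
  have hG' : Vᴴ * (effectiveGenerator H L)ᴴ = (effectiveGenerator K M)ᴴ * Vᴴ := by
    rw [← conjTranspose_mul, hG, conjTranspose_mul]
  have hL' k : Vᴴ * (L k)ᴴ = (M k)ᴴ * Vᴴ := by rw [← conjTranspose_mul, hL, conjTranspose_mul]
  simp only [lindbladMap_eq_effectiveGenerator hH, lindbladMap_eq_effectiveGenerator hK,
    Matrix.mul_add, Matrix.add_mul, Matrix.mul_sum, Matrix.sum_mul]
  congr 2
  · rw [← Matrix.mul_assoc, ← Matrix.mul_assoc, hG, Matrix.mul_assoc V]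
  · rw [Matrix.mul_assoc, hG']
    simp only [Matrix.mul_assoc]
  · ext1 k
    rw [← Matrix.mul_assoc, ← Matrix.mul_assoc, hL, Matrix.mul_assoc _ Vᴴ, hL']
    simp only [Matrix.mul_assoc]

theorem one_sub_mul_conjTranspose_mul (hV : Vᴴ * V = 1) : (1 - V * Vᴴ) * V = 0 := by
  rw [Matrix.sub_mul, Matrix.one_mul, Matrix.mul_assoc, hV, Matrix.mul_one, sub_self]

theorem mul_eq_mul_compress_of_stationary (hH : H.IsHermitian) (hV : Vᴴ * V = 1)
    {r : Matrix κ κ ℂ} (hr : r.PosDef) (hfix : lindbladMap H L (V * r * Vᴴ) = 0) (k : Fin m) :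
    L k * V = V * (Vᴴ * L k * V) := by
  set Q : Matrix ι ι ℂ := 1 - V * Vᴴ
  have hQV : Q * V = 0 := one_sub_mul_conjTranspose_mul hV
  have hVQ : Vᴴ * Qᴴ = 0 := by rw [← conjTranspose_mul, hQV, conjTranspose_zero]
  have hsum : ∑ k, Q * L k * V * r * (Q * L k * V)ᴴ = 0 := by
    have h := congrArg (Q * · * Qᴴ) hfix
    simp only [lindbladMap_eq_effectiveGenerator hH, Matrix.mul_add, Matrix.add_mul,
      Matrix.mul_sum, Matrix.sum_mul, Matrix.mul_zero, Matrix.zero_mul] at h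
    have h₁ : Q * (effectiveGenerator H L * (V * r * Vᴴ)) * Qᴴ = 0 := by
      simp only [Matrix.mul_assoc, hVQ, Matrix.mul_zero]
    have h₂ : Q * (V * r * Vᴴ * (effectiveGenerator H L)ᴴ) * Qᴴ = 0 := by
      simp only [← Matrix.mul_assoc, hQV, Matrix.zero_mul]
    rw [h₁, h₂, zero_add, zero_add] at h
    simpa only [conjTranspose_mul, Matrix.mul_assoc] using h
  have h := eq_zero_of_sum_mul_mul_conjTranspose_eq_zero hr hsum k
  simpa only [Q, Matrix.sub_mul, Matrix.one_mul, Matrix.mul_assoc, sub_eq_zero] using h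

theorem effectiveGenerator_mul_eq_mul_compress_of_stationary (hH : H.IsHermitian) (hV : Vᴴ * V = 1)
    {r : Matrix κ κ ℂ} (hr : r.PosDef) (hfix : lindbladMap H L (V * r * Vᴴ) = 0) :
    effectiveGenerator H L * V = V * (Vᴴ * effectiveGenerator H L * V) := by
  have hL := mul_eq_mul_compress_of_stationary hH hV hr hfix
  set G := effectiveGenerator H L
  set Q : Matrix ι ι ℂ := 1 - V * Vᴴ
  have hQV : Q * V = 0 := one_sub_mul_conjTranspose_mul hV
  have hQLV k : Q * (L k * V) = 0 := by rw [hL, ← Matrix.mul_assoc, hQV, Matrix.zero_mul]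
  have hQGVr : Q * G * V * r = 0 := by
    have h := congrArg (Q * · * V) hfix
    simp only [lindbladMap_eq_effectiveGenerator hH, Matrix.mul_add, Matrix.add_mul,
      Matrix.mul_sum, Matrix.sum_mul, Matrix.mul_zero, Matrix.zero_mul] at h
    have h₁ : Q * (G * (V * r * Vᴴ)) * V = Q * G * V * r := by
      simp only [Matrix.mul_assoc, hV, Matrix.mul_one]
    have h₂ : Q * (V * r * Vᴴ * Gᴴ) * V = 0 := by
      simp only [← Matrix.mul_assoc, hQV, Matrix.zero_mul]
    have h₃ k : Q * (L k * (V * r * Vᴴ) * (L k)ᴴ) * V = 0 := by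
      rw [← Matrix.mul_assoc Q, Matrix.mul_assoc V, ← Matrix.mul_assoc (L k),
        ← Matrix.mul_assoc Q, hQLV, Matrix.zero_mul, Matrix.zero_mul, Matrix.zero_mul]
    rwa [h₁, h₂, Finset.sum_eq_zero fun k _ ↦ h₃ k, add_zero, add_zero] at h
  have hQGV : Q * G * V = 0 := by
    rw [← mul_nonsing_inv_cancel_right r (Q * G * V) ((isUnit_iff_isUnit_det r).mp hr.isUnit),
      hQGVr, Matrix.zero_mul]
  simpa only [Q, Matrix.sub_mul, Matrix.one_mul, Matrix.mul_assoc, sub_eq_zero] using hQGV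

theorem lindbladMap_mul_mul_conjTranspose_of_stationary (hH : H.IsHermitian) (hV : Vᴴ * V = 1)
    {r : Matrix κ κ ℂ} (hr : r.PosDef) (hfix : lindbladMap H L (V * r * Vᴴ) = 0)
    (Y : Matrix κ κ ℂ) :
    lindbladMap H L (V * Y * Vᴴ) =
      V * lindbladMap (Vᴴ * H * V) (fun k ↦ Vᴴ * L k * V) Y * Vᴴ := by
  have hL := mul_eq_mul_compress_of_stationary hH hV hr hfix
  refine lindbladMap_mul_mul_conjTranspose hH (isHermitian_conjTranspose_mul_mul V hH) ?_ hL Y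
  rw [effectiveGenerator_compress hL]
  exact effectiveGenerator_mul_eq_mul_compress_of_stationary hH hV hr hfix

theorem mul_mul_conjTranspose_mem_ker_lindbladMap_iff (hH : H.IsHermitian) (hV : Vᴴ * V = 1)
    {r : Matrix κ κ ℂ} (hr : r.PosDef) (hfix : lindbladMap H L (V * r * Vᴴ) = 0)
    {Y : Matrix κ κ ℂ} :
    V * Y * Vᴴ ∈ LinearMap.ker (lindbladMap H L) ↔
      Y ∈ LinearMap.ker (lindbladMap (Vᴴ * H * V) fun k ↦ Vᴴ * L k * V) := by
  rw [LinearMap.mem_ker, LinearMap.mem_ker,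
    lindbladMap_mul_mul_conjTranspose_of_stationary hH hV hr hfix]
  refine ⟨fun h ↦ ?_, fun h ↦ by rw [h, Matrix.mul_zero, Matrix.zero_mul]⟩
  simpa [← Matrix.mul_assoc, hV, Matrix.mul_assoc _ Vᴴ V] using congrArg (Vᴴ * · * V) h

theorem mem_ker_lindbladMap_iff_exists_compress (hH : H.IsHermitian) (hV : Vᴴ * V = 1)
    {r : Matrix κ κ ℂ} (hr : r.PosDef) (hfix : lindbladMap H L (V * r * Vᴴ) = 0)
    (hmax : suppSet (LinearMap.ker (lindbladMap H L) : Set (Matrix ι ι ℂ)) ≤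
      LinearMap.range V.mulVecLin) {X : Matrix ι ι ℂ} :
    X ∈ LinearMap.ker (lindbladMap H L) ↔
      ∃ Y ∈ LinearMap.ker (lindbladMap (Vᴴ * H * V) fun k ↦ Vᴴ * L k * V), X = V * Y * Vᴴ := by
  refine ⟨fun hX ↦ ?_, ?_⟩
  · have hX' : Xᴴ ∈ LinearMap.ker (lindbladMap H L) := by
      rw [LinearMap.mem_ker, lindbladMap_conjTranspose hH, hX, conjTranspose_zero]
    have hXV : X = V * (Vᴴ * X * V) * Vᴴ := eq_compress_of_suppSet_le hV hmax hX hX'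
    refine ⟨Vᴴ * X * V, ?_, hXV⟩
    rwa [← mul_mul_conjTranspose_mem_ker_lindbladMap_iff hH hV hr hfix, ← hXV]
  · rintro ⟨Y, hY, rfl⟩
    exact (mul_mul_conjTranspose_mem_ker_lindbladMap_iff hH hV hr hfix).mpr hY

end Reduction

/-! ### Statement 2 -/

theorem stmt2
    {ι : Type*} [Fintype ι] [DecidableEq ι]
    (Hm : Matrix ι ι ℂ) (hHm : Hm.IsHermitian) {m : ℕ} (Lk : Fin m → Matrix ι ι ℂ)
    (ρ : Matrix ι ι ℂ) (hρ : IsDensity ρ)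
    (hρfix : lindbladMap Hm Lk ρ = 0)
    (hmax : msupp ρ = suppSet (LinearMap.ker (lindbladMap Hm Lk) : Set (Matrix ι ι ℂ)))
    {κ : Type*} [Fintype κ] [DecidableEq κ]
    (V : Matrix ι κ ℂ) (hiso : Vᴴ * V = 1)
    (hrange : LinearMap.range V.mulVecLin = msupp ρ)
    (Ltd : Matrix κ κ ℂ →ₗ[ℂ] Matrix κ κ ℂ)
    (hadj : IsHSAdjoint (lindbladMap (Vᴴ * Hm * V) fun k => Vᴴ * Lk k * V) Ltd) :
    (LinearMap.ker (lindbladMap Hm Lk) : Set (Matrix ι ι ℂ)) =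
      {X | ∃ Y ∈ LinearMap.ker Ltd, X = msqrt ρ * (V * Y * Vᴴ) * msqrt ρ} := by
  have hsupp : msupp ρ = LinearMap.range ρ.mulVecLin := by rw [msupp, hρ.1.isHermitian.eq]
  obtain ⟨r, hr, rfl⟩ := exists_posDef_eq_mul_mul_conjTranspose hiso hρ.1 (hrange.trans hsupp)
  obtain ⟨s, hs, rfl⟩ := exists_posDef_mul_self_eq hr
  have hmul := mul_mul_conjTranspose_mul_mul_mul_conjTranspose hiso
  have hsqrt : msqrt (V * (s * s) * Vᴴ) = V * s * Vᴴ :=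
    msqrt_eq (hs.posSemidef.mul_mul_conjTranspose_same V) (hmul s s)
  have hfix := (mul_mul_conjTranspose_mem_ker_lindbladMap_iff hHm hiso hr hρfix).mp hρfix
  have hfull (Z : Matrix κ κ ℂ) :
      Z ∈ LinearMap.ker (lindbladMap (Vᴴ * Hm * V) fun k ↦ Vᴴ * Lk k * V) ↔
        ∃ Y ∈ LinearMap.ker Ltd, Z = s * Y * s :=
    hadj.mem_ker_iff_exists_eq_mul_mul (isHermitian_conjTranspose_mul_mul V hHm) hs hfix
  ext X
  rw [SetLike.mem_coe, mem_ker_lindbladMap_iff_exists_compress hHm hiso hr hρfix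
    (hmax.symm.trans hrange.symm).le]
  simp only [hfull, hsqrt, hmul, Set.mem_ofPred_eq]
  exact ⟨fun ⟨_, ⟨Y, hY, rfl⟩, hX⟩ ↦ ⟨Y, hY, hX⟩, fun ⟨Y, hY, hX⟩ ↦ ⟨_, ⟨Y, hY, rfl⟩, hX⟩⟩

end QDS
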